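/- Let k ⊆ K be a field extension, let m, n ≥ 2, and let a_1, …, a_m, b_1, …, b_m, g_1, …, g_n ∈ K be such that the family of all 2m + n elements (a_i, b_i, g_j) is algebraically independent over k. Set c_{ij} = a_i + b_i·g_j for 1 ≤ i ≤ m and 1 ≤ j ≤ n. Then the transcendence degree over k of the subfield k(c_{ij} : 1 ≤ i ≤ m, 1 ≤ j ≤ n) equals 2m + n − 2. -/

import Mathlib

/-- The transcendence degree of a (commutative ring) extension `K / k`: the supremum of
the cardinalities of subsets of `K` that are algebraically independent over `k`. -/
noncomputable def trdeg (k K : Type*) [CommRing k] [CommRing K] [Algebra k K] : Cardinal :=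
  ⨆ s : {s : Set K // AlgebraicIndependent k ((↑) : s → K)}, Cardinal.mk s.1

/-!
Write `C` for the field generated by the `c i j = a i + b i * g j` and fix two columns `j₀ ≠ j₁`.
Since `c i j = c i j₀ + (c i j₁ - c i j₀) * ((g j - g j₀) / (g j₁ - g j₀))`, the field `C` is
contained in one generated by the two columns and one affine ratio for each remaining column, so
its transcendence degree is at most `2m + (n - 2)`. Conversely, adjoining `g j₀` and `g j₁` to `C`
recovers every `a i`, `b i` and `g j`, so `2m + n` is at most the transcendence degree of `C`
plus `2`.
-/

open Cardinal
open IntermediateField hiding lift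

universe v w

theorem trdeg_eq_algebraTrdeg (k K : Type*) [CommRing k] [CommRing K] [Algebra k K] :
    trdeg k K = Algebra.trdeg k K :=
  rfl

section TranscendenceDegree

variable {k : Type*} {K : Type v} [Field k] [Field K] [Algebra k K]

theorem trdeg_mono {E F : IntermediateField k K} (hEF : E ≤ F) : trdeg k E ≤ trdeg k F := by
  simp only [trdeg_eq_algebraTrdeg]
  exact trdeg_le_of_injective (inclusion hEF) (inclusion_injective hEF)

open scoped algebraAdjoinAdjoin in
theorem trdeg_adjoin_le_cardinalMk (S : Set K) : trdeg k (adjoin k S) ≤ #S := by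
  have : Algebra.IsAlgebraic
      (Algebra.adjoin k ((↑) ⁻¹' S : Set (Algebra.adjoin k S))) (Algebra.adjoin k S) := by
    rw [Algebra.adjoin_adjoin_coe_preimage]
    exact ⟨fun x => isAlgebraic_algebraMap (⟨x, trivial⟩ : (⊤ : Subalgebra k (Algebra.adjoin k S)))⟩
  rw [trdeg_eq_algebraTrdeg]
  calc Algebra.trdeg k (adjoin k S)
      = Algebra.trdeg k (Algebra.adjoin k S) +
          Algebra.trdeg (Algebra.adjoin k S) (adjoin k S) := (trdeg_add_eq ..).symm
    _ = Algebra.trdeg k (Algebra.adjoin k S) := by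
        rw [trdeg_eq_zero (A := adjoin k S), add_zero]
    _ ≤ #((↑) ⁻¹' S : Set (Algebra.adjoin k S)) := Algebra.IsAlgebraic.trdeg_le_cardinalMk ..
    _ ≤ #S := mk_preimage_of_injective _ _ Subtype.val_injective

theorem trdeg_sup_adjoin_le (F : IntermediateField k K) (S : Set K) :
    trdeg k ↥(F ⊔ adjoin k S) ≤ trdeg k F + #S := by
  have : FaithfulSMul F (adjoin F S) :=
    (faithfulSMul_iff_algebraMap_injective ..).mpr (algebraMap F (adjoin F S)).injective
  calc trdeg k ↥(F ⊔ adjoin k S)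
      = trdeg k (adjoin F S) := by rw [← restrictScalars_adjoin_eq_sup]; rfl
    _ = trdeg k F + trdeg F (adjoin F S) := by simp only [trdeg_eq_algebraTrdeg, trdeg_add_eq]
    _ ≤ trdeg k F + #S := by gcongr; exact trdeg_adjoin_le_cardinalMk S

theorem lift_cardinalMk_le_lift_trdeg_of_range_subset {ι : Type w} {x : ι → K}
    (hx : AlgebraicIndependent k x) {F : IntermediateField k K} (hxF : Set.range x ⊆ F) :
    lift.{v} #ι ≤ lift.{w} (trdeg k F) := by
  have hxF' : AlgebraicIndependent k fun i => (⟨x i, hxF ⟨i, rfl⟩⟩ : F) := .of_comp F.val hx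
  rw [trdeg_eq_algebraTrdeg]
  exact hxF'.lift_cardinalMk_le_trdeg

end TranscendenceDegree

section AffineConfiguration

variable {k : Type*} {K : Type v} [Field k] [Field K] [Algebra k K] {ι κ : Type w}

variable (k) in
/-- The field `k(c i j)` generated by the affine configuration `c i j = a i + b i * g j`, that is,
by the values at the points `g j` of the affine maps `x ↦ a i + b i * x`. -/
def affineConfigurationField (a b : ι → K) (g : κ → K) : IntermediateField k K :=
  adjoin k (Set.range fun p : ι × κ => a p.1 + b p.1 * g p.2)

variable {a b : ι → K} {g : κ → K}

theorem add_mul_mem_affineConfigurationField (i : ι) (j : κ) :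
    a i + b i * g j ∈ affineConfigurationField k a b g :=
  subset_adjoin k _ ⟨(i, j), rfl⟩

theorem affineConfigurationField_le_adjoin {j₀ j₁ : κ} (hg : g j₁ ≠ g j₀) :
    affineConfigurationField k a b g ≤ adjoin k (Set.range (Sum.elim (fun i => a i + b i * g j₀)
      (Sum.elim (fun i => a i + b i * g j₁)
        fun j : ({j₀, j₁}ᶜ : Set κ) => (g j - g j₀) / (g j₁ - g j₀)))) := by
  set x := Sum.elim (fun i => a i + b i * g j₀) (Sum.elim (fun i => a i + b i * g j₁)
    fun j : ({j₀, j₁}ᶜ : Set κ) => (g j - g j₀) / (g j₁ - g j₀))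
  have mem_adjoin (t) : x t ∈ adjoin k (Set.range x) := subset_adjoin k _ ⟨t, rfl⟩
  have column₀_mem (i) : a i + b i * g j₀ ∈ adjoin k (Set.range x) := mem_adjoin (.inl i)
  have column₁_mem (i) : a i + b i * g j₁ ∈ adjoin k (Set.range x) := mem_adjoin (.inr (.inl i))
  refine adjoin_le_iff.mpr ?_
  rintro _ ⟨⟨i, j⟩, rfl⟩
  by_cases hj : j ∈ ({j₀, j₁} : Set κ)
  · obtain rfl | rfl := hj
    exacts [column₀_mem i, column₁_mem i]
  · have interpolation : a i + b i * g j = a i + b i * g j₀ +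
        (a i + b i * g j₁ - (a i + b i * g j₀)) * ((g j - g j₀) / (g j₁ - g j₀)) := by
      field_simp [sub_ne_zero.mpr hg]
      ring
    simp only [interpolation]
    exact add_mem (column₀_mem i)
      (mul_mem (sub_mem (column₁_mem i) (column₀_mem i)) (mem_adjoin (.inr (.inr ⟨j, hj⟩))))

theorem range_subset_affineConfigurationField_sup_adjoin {i₀ : ι} {j₀ j₁ : κ} (hb : b i₀ ≠ 0)
    (hg : g j₁ ≠ g j₀) :
    Set.range (Sum.elim a (Sum.elim b g)) ⊆
      (affineConfigurationField k a b g ⊔ adjoin k {g j₀, g j₁} : IntermediateField k K) := by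
  set F := affineConfigurationField k a b g ⊔ adjoin k {g j₀, g j₁}
  have entry_mem (i j) : a i + b i * g j ∈ F :=
    le_sup_left (a := affineConfigurationField k a b g) (add_mul_mem_affineConfigurationField i j)
  have point_mem {x} (hx : x ∈ ({g j₀, g j₁} : Set K)) : x ∈ F :=
    le_sup_right (a := affineConfigurationField k a b g) (subset_adjoin k _ hx)
  have g₀_mem : g j₀ ∈ F := point_mem (by simp)
  have g₁_mem : g j₁ ∈ F := point_mem (by simp)
  have b_mem (i) : b i ∈ F := by
    have slope : (a i + b i * g j₁ - (a i + b i * g j₀)) / (g j₁ - g j₀) = b i := by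
      field_simp [sub_ne_zero.mpr hg]
      ring
    exact slope ▸ div_mem (sub_mem (entry_mem i j₁) (entry_mem i j₀)) (sub_mem g₁_mem g₀_mem)
  have a_mem (i) : a i ∈ F := by
    simpa using sub_mem (entry_mem i j₀) (mul_mem (b_mem i) g₀_mem)
  have g_mem (j) : g j ∈ F := by
    simpa [hb] using div_mem (sub_mem (entry_mem i₀ j) (a_mem i₀)) (b_mem i₀)
  rintro _ ⟨i | i | j, rfl⟩
  exacts [a_mem i, b_mem i, g_mem j]

theorem lift_trdeg_affineConfigurationField_add_two_le {j₀ j₁ : κ} (hg : g j₁ ≠ g j₀) :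
    lift.{w} (trdeg k (affineConfigurationField k a b g)) + 2 ≤ lift.{v} (2 * #ι + #κ) := by
  have hj : j₀ ≠ j₁ := ne_of_apply_ne g hg.symm
  have mk_compl_add_two : #({j₀, j₁}ᶜ : Set κ) + 2 = #κ := by
    rw [← mk_sum_compl {j₀, j₁}, mk_insert (by simpa using hj), mk_singleton, add_comm,
      one_add_one_eq_two]
  have trdeg_le := (trdeg_mono (affineConfigurationField_le_adjoin (k := k) (a := a) (b := b)
    hg)).trans (trdeg_adjoin_le_cardinalMk _)
  calc lift.{w} (trdeg k (affineConfigurationField k a b g)) + 2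
      ≤ lift.{v} #(ι ⊕ ι ⊕ ({j₀, j₁}ᶜ : Set κ)) + 2 := by
        gcongr
        exact (lift_le.mpr trdeg_le).trans mk_range_le_lift
    _ = lift.{v} (2 * #ι + #κ) := by simp [← mk_compl_add_two, two_mul, add_assoc]

theorem le_lift_trdeg_affineConfigurationField_add_two [Nonempty ι] [Nontrivial κ]
    (habg : AlgebraicIndependent k (Sum.elim a (Sum.elim b g))) :
    lift.{v} (2 * #ι + #κ) ≤ lift.{w} (trdeg k (affineConfigurationField k a b g)) + 2 := by
  obtain ⟨i₀⟩ := ‹Nonempty ι›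
  obtain ⟨j₀, j₁, hj⟩ := exists_pair_ne κ
  have hb : b i₀ ≠ 0 := habg.ne_zero (.inr (.inl i₀))
  have g_injective : Function.Injective g :=
    habg.injective.comp (Sum.inr_injective.comp Sum.inr_injective)
  calc lift.{v} (2 * #ι + #κ)
      = lift.{v} #(ι ⊕ ι ⊕ κ) := by simp [two_mul, add_assoc]
    _ ≤ lift.{w} (trdeg k ↥(affineConfigurationField k a b g ⊔ adjoin k {g j₀, g j₁})) :=
        lift_cardinalMk_le_lift_trdeg_of_range_subset habg
          (range_subset_affineConfigurationField_sup_adjoin hb (g_injective.ne hj.symm))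
    _ ≤ lift.{w} (trdeg k (affineConfigurationField k a b g) + 2) := by
        refine lift_le.mpr ((trdeg_sup_adjoin_le ..).trans ?_)
        grw [mk_insert_le, mk_singleton, one_add_one_eq_two]
    _ = lift.{w} (trdeg k (affineConfigurationField k a b g)) + 2 := by simp

theorem trdeg_adjoin_affine_configuration_general [Nonempty ι] [Nontrivial κ] (a b : ι → K)
    (g : κ → K) (habg : AlgebraicIndependent k (Sum.elim a (Sum.elim b g))) :
    lift.{w} (trdeg k (adjoin k (Set.range fun p : ι × κ => a p.1 + b p.1 * g p.2))) + 2 =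
      lift.{v} (2 * #ι + #κ) := by
  obtain ⟨j₀, j₁, hj⟩ := exists_pair_ne κ
  have g_injective : Function.Injective g :=
    habg.injective.comp (Sum.inr_injective.comp Sum.inr_injective)
  exact le_antisymm (lift_trdeg_affineConfigurationField_add_two_le (g_injective.ne hj.symm))
    (le_lift_trdeg_affineConfigurationField_add_two habg)

end AffineConfiguration

/-- The rank computation of Proposition 4 (field configuration): if the `2m + n` elements
`a_1, …, a_m, b_1, …, b_m, g_1, …, g_n` (`m, n ≥ 2`) are algebraically independent over
`k` and `c_{ij} = a_i + b_i * g_j`, then the subfield `k(c_{ij} : i, j)` has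
transcendence degree `2m + n - 2` over `k`. -/
theorem trdeg_adjoin_affine_configuration {k K : Type*} [Field k] [Field K] [Algebra k K]
    {m n : ℕ} (hm : 2 ≤ m) (hn : 2 ≤ n)
    (a b : Fin m → K) (g : Fin n → K)
    (habg : AlgebraicIndependent k (Sum.elim a (Sum.elim b g))) :
    trdeg k (IntermediateField.adjoin k
        (Set.range fun p : Fin m × Fin n => a p.1 + b p.1 * g p.2)) =
      ((2 * m + n - 2 : ℕ) : Cardinal) := by
  have : NeZero m := ⟨by lia⟩
  have : Nontrivial (Fin n) := Fin.nontrivial_iff_two_le.mpr hn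
  rw [← add_nat_inj 2, ← Nat.cast_add, Nat.sub_add_cancel (by lia)]
  simpa using trdeg_adjoin_affine_configuration_general a b g habg
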